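/- Let m be an integer with 1 ≤ m ≤ 5 such that F(x) = x^6 + 72 x^m + 35 is irreducible over ℚ, and let K = ℚ(α) for a root α of F. Then there are exactly three distinct prime ideals of ℤ_K lying above 2, each with residue degree 2. -/

import Mathlib

open Polynomial NumberField

/-!
Modulo `8` the polynomial `F` is `X ^ 6 + 3`, so `(α ^ 3) ^ 2 ≡ 1 - 4` modulo `8` and
`γ = (α ^ 3 + 1) / 2` is an algebraic integer with `γ ^ 2 - γ + 1 ≡ 0` modulo `2`: in every
residue field of characteristic `2`, `γ` is a primitive cube root of unity, so residue degrees above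
`2` are at least `2`. There `α ^ 3 = 1` too, so `α` is one of `1`, `γ`, `γ ^ 2`. All three
possibilities occur: since `F ≡ X ^ 6 + 3`, the trace of `α ^ k` is divisible by `8` unless `6 ∣ k`,
which makes the trace of `γ (1 + γ ^ i α + γ ^ (2 i) α ^ 2)` odd; this element is thus nonzero
modulo `2`, while `1 - γ ^ i α` annihilates it modulo `2`. Three primes of residue degree at least
`2` exhaust `∑ e f = 6`.
-/

section TraceOfPowers

theorem X_pow_modByMonic_X_pow_add_C {R : Type*} [CommRing R] {n : ℕ} (hn : n ≠ 0) (c : R)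
    (j : ℕ) : X ^ j %ₘ (X ^ n + C c) = C ((-c) ^ (j / n)) * X ^ (j % n) := by
  nontriviality R
  have hmonic : (X ^ n + C c).Monic := monic_X_pow_add_C c hn
  have hdvd : X ^ n + C c ∣ X ^ j - C ((-c) ^ (j / n)) * X ^ (j % n) := by
    have h := sub_dvd_pow_sub_pow (X ^ n : R[X]) (C (-c)) (j / n)
    rw [C_neg, sub_neg_eq_add, ← C_neg, ← C_pow, ← pow_mul] at h
    convert! h.mul_right (X ^ (j % n)) using 1
    rw [sub_mul, ← pow_add, Nat.div_add_mod]
  rw [modByMonic_eq_of_dvd_sub hmonic hdvd, modByMonic_eq_self_iff hmonic,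
    degree_X_pow_add_C hn.bot_lt]
  exact (degree_C_mul_X_pow_le _ _).trans_lt (mod_cast Nat.mod_lt j hn.bot_lt)

theorem coeff_X_pow_add_modByMonic_X_pow_add_C {R : Type*} [CommRing R] {n i k : ℕ} (c : R)
    (hi : i < n) (hk : ¬ n ∣ k) : (X ^ (k + i) %ₘ (X ^ n + C c)).coeff i = 0 := by
  rw [X_pow_modByMonic_X_pow_add_C hi.ne_bot, coeff_C_mul_X_pow, if_neg]
  intro h
  refine hk (Nat.modEq_zero_iff_dvd.mp (Nat.ModEq.add_right_cancel' i ?_))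
  rw [Nat.ModEq, ← h, zero_add, Nat.mod_eq_of_lt hi]

variable {R A S : Type*} [CommRing R] [CommRing A] [CommRing S]
  [Algebra R A] [Algebra A S] [Algebra R S] [IsScalarTower R A S]

theorem repr_aeval_gen_eq_coeff_modByMonic (pb : PowerBasis A S) {F : R[X]} (hF : F.Monic)
    (hdim : F.natDegree = pb.dim) (hroot : aeval pb.gen F = 0) (p : R[X]) (i : Fin pb.dim) :
    pb.basis.repr (aeval pb.gen p) i = algebraMap R A ((p %ₘ F).coeff i) := by
  rcases subsingleton_or_nontrivial R with _ | _
  · have := Module.subsingleton R A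
    exact Subsingleton.elim _ _
  have hdeg : (p %ₘ F).degree < pb.dim := by
    simpa only [degree_eq_natDegree hF.ne_zero, hdim] using degree_modByMonic_lt p hF
  have hsum : aeval pb.gen p =
      ∑ j : Fin pb.dim, algebraMap R A ((p %ₘ F).coeff j) • pb.basis j := by
    rw [← aeval_modByMonic_eq_self_of_root hroot, aeval_def, eval₂_eq_sum,
      ← sum_fin (fun j a ↦ algebraMap R S a * pb.gen ^ j) (by simp) hdeg]
    simp [Algebra.smul_def, ← IsScalarTower.algebraMap_apply]
  rw [hsum, pb.basis.repr_sum_self]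

theorem trace_gen_pow_eq_sum_coeff_modByMonic (pb : PowerBasis A S) {F : R[X]} (hF : F.Monic)
    (hdim : F.natDegree = pb.dim) (hroot : aeval pb.gen F = 0) (k : ℕ) :
    Algebra.trace A S (pb.gen ^ k) =
      algebraMap R A (∑ i : Fin pb.dim, (X ^ (k + i) %ₘ F).coeff i) := by
  rw [Algebra.trace_eq_matrix_trace pb.basis, map_sum]
  refine Finset.sum_congr rfl fun i _ ↦ ?_
  rw [Matrix.diag_apply, Algebra.leftMulMatrix_eq_repr_mul, pb.coe_basis, ← pow_add,
    ← repr_aeval_gen_eq_coeff_modByMonic pb hF hdim hroot, aeval_X_pow]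

theorem exists_trace_gen_pow_eq_algebraMap {R' : Type*} [CommRing R'] (f : R →+* R')
    (pb : PowerBasis A S) {F : R[X]} (hF : F.Monic) (hdim : F.natDegree = pb.dim)
    (hroot : aeval pb.gen F = 0) {c : R'} (hmap : F.map f = X ^ pb.dim + C c)
    {k : ℕ} (hk : ¬ pb.dim ∣ k) :
    ∃ t : R, Algebra.trace A S (pb.gen ^ k) = algebraMap R A t ∧ f t = 0 := by
  refine ⟨_, trace_gen_pow_eq_sum_coeff_modByMonic pb hF hdim hroot k, ?_⟩
  rw [map_sum]
  refine Finset.sum_eq_zero fun i _ ↦ ?_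
  rw [← coeff_map, map_modByMonic f hF, hmap, Polynomial.map_pow, map_X]
  exact coeff_X_pow_add_modByMonic_X_pow_add_C c i.isLt hk

end TraceOfPowers

section NumberField

variable {K : Type*} [Field K] [NumberField K] {α : 𝓞 K} {F : ℤ[X]}

theorem exists_powerBasis_gen_eq_of_irreducible (hF : F.Monic) (hirr : Irreducible F)
    (hroot : aeval (α : K) F = 0) (hgen : Algebra.adjoin ℚ {(α : K)} = ⊤) :
    ∃ pb : PowerBasis ℚ K, pb.gen = α ∧ pb.dim = F.natDegree := by
  have hmin : F.map (algebraMap ℤ ℚ) = minpoly ℚ (α : K) :=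
    minpoly.eq_of_irreducible_of_monic (hF.irreducible_iff_irreducible_map_fraction_map.mp hirr)
      (by rwa [aeval_map_algebraMap]) (hF.map _)
  have hint : IsIntegral ℚ (α : K) := Algebra.IsIntegral.isIntegral _
  refine ⟨PowerBasis.ofAdjoinEqTop hint hgen, PowerBasis.ofAdjoinEqTop_gen _ _, ?_⟩
  rw [PowerBasis.ofAdjoinEqTop_dim, ← hmin, hF.natDegree_map]

theorem finrank_eq_natDegree_of_irreducible (hF : F.Monic) (hirr : Irreducible F)
    (hroot : aeval (α : K) F = 0) (hgen : Algebra.adjoin ℚ {(α : K)} = ⊤) :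
    Module.finrank ℤ (𝓞 K) = F.natDegree := by
  obtain ⟨pb, -, hdim⟩ := exists_powerBasis_gen_eq_of_irreducible hF hirr hroot hgen
  rw [RingOfIntegers.rank, pb.finrank, hdim]

theorem natCast_dvd_trace_pow_of_not_natDegree_dvd (hF : F.Monic) (hirr : Irreducible F)
    (hroot : aeval (α : K) F = 0) (hgen : Algebra.adjoin ℚ {(α : K)} = ⊤) {N : ℕ} {c : ZMod N}
    (hmap : F.map (Int.castRingHom (ZMod N)) = X ^ F.natDegree + C c)
    {k : ℕ} (hk : ¬ F.natDegree ∣ k) : (N : ℤ) ∣ Algebra.trace ℤ (𝓞 K) (α ^ k) := by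
  obtain ⟨pb, hα, hdim⟩ := exists_powerBasis_gen_eq_of_irreducible hF hirr hroot hgen
  rw [← hdim] at hmap hk
  obtain ⟨t, ht, hNt⟩ :=
    exists_trace_gen_pow_eq_algebraMap _ pb hF hdim.symm (hα ▸ hroot) hmap hk
  have hcoe : ((α ^ k : 𝓞 K) : K) = pb.gen ^ k := by
    rw [hα]
    exact map_pow (algebraMap (𝓞 K) K) α k
  have htrace : (Algebra.trace ℤ (𝓞 K) (α ^ k) : ℚ) = t := by
    rw [Algebra.coe_trace_int, hcoe, ht, eq_intCast]
  rwa [Int.cast_injective htrace, ← ZMod.intCast_zmod_eq_zero_iff_dvd]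

end NumberField

theorem natCast_dvd_aeval_sub_aeval {S : Type*} [CommRing S] {N : ℕ} {F G : ℤ[X]}
    (h : F.map (Int.castRingHom (ZMod N)) = G.map (Int.castRingHom (ZMod N))) (x : S) :
    (N : S) ∣ aeval x F - aeval x G := by
  have hdvd : C (N : ℤ) ∣ F - G := by
    rw [C_dvd_iff_dvd_coeff]
    intro i
    rw [← ZMod.intCast_zmod_eq_zero_iff_dvd, ← eq_intCast (Int.castRingHom (ZMod N)), ← coeff_map,
      Polynomial.map_sub, h, sub_self, coeff_zero]
  simpa using map_dvd (aeval x) hdvd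

theorem exists_two_mul_eq_add_one_of_sq_eq {S : Type*} [CommRing S] [IsDomain S]
    [IsIntegrallyClosed S] (h2 : (2 : S) ≠ 0) {x d : S} (hx : x ^ 2 = 1 + 4 * d) :
    ∃ y : S, 2 * y = x + 1 ∧ y ^ 2 - y = d := by
  have hinj := IsFractionRing.injective S (FractionRing S)
  have hL : (2 : FractionRing S) ≠ 0 := by
    rwa [← map_ofNat (algebraMap S (FractionRing S)) 2, map_ne_zero_iff _ hinj]
  obtain ⟨z, hz⟩ : ∃ z, 2 * z = algebraMap S (FractionRing S) x + 1 := ⟨_, mul_div_cancel₀ _ hL⟩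
  have hz_sq : z ^ 2 - z = algebraMap S (FractionRing S) d := by
    have hx' := congrArg (algebraMap S (FractionRing S)) hx
    simp only [map_pow, map_add, map_one, map_mul, map_ofNat] at hx'
    apply mul_left_cancel₀ (mul_ne_zero hL hL)
    linear_combination hx' + (2 * z + algebraMap S (FractionRing S) x - 1) * hz
  have hint : IsIntegral S z := by
    refine ⟨X ^ 2 + (-X + C (-d)), monic_X_pow_add (by compute_degree!), ?_⟩
    simp only [eval₂_add, eval₂_neg, eval₂_pow, eval₂_X, eval₂_C, map_neg]
    linear_combination hz_sq
  obtain ⟨y, rfl⟩ := IsIntegrallyClosed.isIntegral_iff.mp hint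
  refine ⟨y, hinj ?_, hinj ?_⟩
  · simpa only [map_mul, map_add, map_one, map_ofNat] using hz
  · simpa only [map_sub, map_pow] using hz_sq

theorem exists_isMaximal_of_mul_mem {S : Type*} [CommRing S] {I : Ideal S} {x e : S}
    (he : e ∉ I) (hxe : x * e ∈ I) : ∃ P : Ideal S, P.IsMaximal ∧ I ≤ P ∧ x ∈ P := by
  have hne : I ⊔ Ideal.span {x} ≠ ⊤ := by
    intro h
    obtain ⟨a, ha, b, hb, hab⟩ := Submodule.mem_sup.mp ((Ideal.eq_top_iff_one _).mp h)
    obtain ⟨y, rfl⟩ := Ideal.mem_span_singleton'.mp hb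
    refine he ?_
    convert! I.add_mem (I.mul_mem_right e ha) (I.mul_mem_left y hxe) using 1
    linear_combination -e * hab
  obtain ⟨P, hP, hle⟩ := Ideal.exists_le_maximal _ hne
  exact ⟨P, hP, le_sup_left.trans hle, hle (Ideal.mem_sup_right (Ideal.mem_span_singleton_self x))⟩

section PrimesOver

theorem dvd_natCard_sub_one_of_isPrimitiveRoot {k : Type*} [Field k] [Finite k] {n : ℕ} {ζ : k}
    (hn : n ≠ 0) (hζ : IsPrimitiveRoot ζ n) : n ∣ Nat.card k - 1 := by
  have := Fintype.ofFinite k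
  rw [Nat.card_eq_fintype_card]
  exact hζ.dvd_of_pow_eq_one _ (FiniteField.pow_card_sub_one_eq_one ζ (hζ.ne_zero hn))

theorem mem_primesOver_span_natCast_iff {S : Type*} [CommRing S] [Algebra.IsIntegral ℤ S] {p : ℕ}
    (hp : p.Prime) {P : Ideal S} :
    P ∈ (Ideal.span {(p : ℤ)}).primesOver S ↔ P.IsMaximal ∧ (p : S) ∈ P := by
  have hpℤ : Prime (p : ℤ) := Nat.prime_iff_prime_int.mp hp
  have : (Ideal.span {(p : ℤ)}).IsMaximal :=
    PrincipalIdealRing.isMaximal_of_irreducible hpℤ.irreducible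
  constructor
  · intro hP
    have hmax : P.IsMaximal := Ideal.isMaximal_of_mem_primesOver hP
    exact ⟨hmax, by simpa using (Ideal.liesOver_span_iff hmax.ne_top hpℤ).mp hP.2⟩
  · rintro ⟨hmax, hmem⟩
    exact ⟨hmax.isPrime, (Ideal.liesOver_span_iff hmax.ne_top hpℤ).mpr (by simpa using hmem)⟩

theorem natCard_quotient_eq_pow_inertiaDeg {S : Type*} [CommRing S] [IsDedekindDomain S]
    [Module.Free ℤ S] [Module.Finite ℤ S] (p : ℕ) (P : Ideal S) [P.IsPrime]
    [P.LiesOver (Ideal.span {(p : ℤ)})] : Nat.card (S ⧸ P) = p ^ P.inertiaDeg ℤ := by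
  rw [Ideal.pow_inertiaDeg p P, Ideal.absNorm_apply, Submodule.cardQuot_apply]

theorem two_le_inertiaDeg_of_isPrimitiveRoot {S : Type*} [CommRing S] [IsDedekindDomain S]
    [Module.Free ℤ S] [Module.Finite ℤ S] {p n : ℕ} (hp : p ≠ 0) (hn : n ≠ 0)
    (hnp : ¬ n ∣ p - 1) (P : Ideal S) [P.IsMaximal] [P.LiesOver (Ideal.span {(p : ℤ)})] {ζ : S ⧸ P}
    (hζ : IsPrimitiveRoot ζ n) : 2 ≤ P.inertiaDeg ℤ := by
  have hcard := natCard_quotient_eq_pow_inertiaDeg p P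
  let _ : Field (S ⧸ P) := Ideal.Quotient.field P
  have : Finite (S ⧸ P) := Nat.finite_of_card_ne_zero (hcard ▸ pow_ne_zero _ hp)
  have hdvd := dvd_natCard_sub_one_of_isPrimitiveRoot hn hζ
  have hpos := Ideal.inertiaDeg_pos P ℤ
  have hne : P.inertiaDeg ℤ ≠ 1 := by
    intro h
    rw [hcard, h, pow_one] at hdvd
    exact hnp hdvd
  omega

theorem ncard_primesOver_and_inertiaDeg_eq {R S : Type*} [CommRing R] [IsDomain R] [CommRing S]
    [Algebra R S] [Module.Finite R S] [Module.Flat R S] {p : Ideal R} [p.IsPrime] {n d : ℕ}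
    (hrank : Module.finrank R S = n * d) (hd : d ≠ 0)
    (hn : n ≤ (p.primesOver S).ncard) (hdeg : ∀ P ∈ p.primesOver S, d ≤ P.inertiaDeg R) :
    (p.primesOver S).ncard = n ∧ ∀ P ∈ p.primesOver S, P.inertiaDeg R = d := by
  have : Fintype (p.primesOver S) := (Algebra.QuasiFinite.finite_primesOver p).fintype
  have hinertia_le (P : p.primesOver S) :
      P.1.inertiaDeg R ≤ P.1.ramificationIdx R * P.1.inertiaDeg R :=
    have := P.2.1
    Nat.le_mul_of_pos_left _ (P.1.ramificationIdx_pos R)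
  have hle (P : p.primesOver S) : d ≤ P.1.ramificationIdx R * P.1.inertiaDeg R :=
    (hdeg P P.2).trans (hinertia_le P)
  have hsum := Ideal.sum_ramification_inertia_eq_finrank p S
  have hcard : (p.primesOver S).ncard = n := by
    refine (Nat.le_of_mul_le_mul_right ?_ (Nat.pos_of_ne_zero hd)).antisymm hn
    rw [← hrank, ← hsum, ← Nat.card_coe_set_eq, Nat.card_eq_fintype_card]
    exact Finset.card_nsmul_le_sum _ _ _ fun P _ ↦ hle P
  refine ⟨hcard, fun P hP ↦ ?_⟩
  have hsum_const : ∑ _P : p.primesOver S, d = n * d := by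
    rw [Finset.sum_const, Finset.card_univ, ← Nat.card_eq_fintype_card, Nat.card_coe_set_eq, hcard,
      smul_eq_mul]
  have heq := (Finset.sum_eq_sum_iff_of_le fun P _ ↦ hle P).mp
    (hsum_const.trans (hrank.symm.trans hsum.symm)) ⟨P, hP⟩ (Finset.mem_univ _)
  exact ((hinertia_le ⟨P, hP⟩).trans heq.ge).antisymm (hdeg P hP)

end PrimesOver

section CubeRoots

variable {S : Type*} [CommRing S] {α γ : S}

theorem isPrimitiveRoot_mk_three {P : Ideal S} [P.IsPrime] (h2 : (2 : S) ∈ P)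
    (hγ : 2 ∣ γ ^ 2 - γ + 1) : IsPrimitiveRoot (Ideal.Quotient.mk P γ) 3 := by
  have two : (2 : S ⧸ P) = 0 := by
    simpa only [map_ofNat] using Ideal.Quotient.eq_zero_iff_mem.mpr h2
  have hroot : Ideal.Quotient.mk P (γ ^ 2 - γ + 1) = 0 :=
    Ideal.Quotient.eq_zero_iff_mem.mpr (P.mem_of_dvd hγ h2)
  simp only [map_add, map_sub, map_pow, map_one] at hroot
  have : NeZero ((3 : ℕ) : S ⧸ P) := ⟨fun h ↦ one_ne_zero (α := S ⧸ P) (by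
    push_cast at h
    linear_combination h - two)⟩
  rw [← isRoot_cyclotomic_iff, cyclotomic_three]
  simp only [IsRoot.def, eval_add, eval_pow, eval_X, eval_one]
  linear_combination hroot + Ideal.Quotient.mk P γ * two

theorem two_dvd_one_sub_pow_mul_pow_three (hγ : 2 ∣ γ ^ 2 - γ + 1) (hα : 2 * γ = α ^ 3 + 1)
    (i : ℕ) : 2 ∣ 1 - (γ ^ i * α) ^ 3 := by
  have hα3 : 2 ∣ 1 - α ^ 3 := ⟨1 - γ, by linear_combination hα⟩
  have hγ3 : 2 ∣ 1 - γ ^ 3 := by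
    convert! (dvd_refl 2).sub (hγ.mul_left (γ + 1)) using 1
    ring
  have hγi : 2 ∣ 1 - (γ ^ 3) ^ i := by
    simpa only [one_pow] using hγ3.trans (sub_dvd_pow_sub_pow 1 (γ ^ 3) i)
  convert! hγi.add (hα3.mul_left ((γ ^ 3) ^ i)) using 1
  ring

theorem two_dvd_apply_pow_mul (L : S →ₗ[ℤ] ℤ) (hγ : 2 ∣ γ ^ 2 - γ + 1) {x : S}
    (h0 : 2 ∣ L x) (h1 : 2 ∣ L (γ * x)) (i : ℕ) : 2 ∣ L (γ ^ i * x) := by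
  obtain ⟨d, hd⟩ := hγ
  induction i using Nat.twoStepInduction with
  | zero => simpa using h0
  | one => simpa using h1
  | more i ih ih' =>
    have hrec : γ ^ (i + 2) * x = γ ^ (i + 1) * x - γ ^ i * x + (2 : ℤ) • (γ ^ i * x * d) := by
      simp only [zsmul_eq_mul, Int.cast_ofNat]
      linear_combination γ ^ i * x * hd
    rw [hrec, map_add, map_sub, map_smul, smul_eq_mul]
    exact (ih'.sub ih).add (dvd_mul_right 2 _)

theorem not_two_dvd_of_apply_pow (L : S →ₗ[ℤ] ℤ) (hL1 : L 1 = 6)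
    (hL : ∀ k, ¬ 6 ∣ k → 4 ∣ L (α ^ k)) (hγ : 2 ∣ γ ^ 2 - γ + 1) (hα : 2 * γ = α ^ 3 + 1) (i : ℕ) :
    ¬ 2 ∣ γ * (1 + γ ^ i * α + (γ ^ i * α) ^ 2) := by
  have hLγ (k : ℕ) : 2 * L (γ * α ^ k) = L (α ^ (k + 3)) + L (α ^ k) := by
    rw [← smul_eq_mul, ← map_smul, ← map_add]
    congr 1
    simp only [zsmul_eq_mul, Int.cast_ofNat]
    linear_combination α ^ k * hα
  have heven (k : ℕ) (hk : ¬ 3 ∣ k) (j : ℕ) : 2 ∣ L (γ ^ j * α ^ k) := by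
    have h3 := hL (k + 3) (by omega)
    have h0 := hL k (by omega)
    have := hLγ k
    exact two_dvd_apply_pow_mul L hγ (by omega) (by omega) j
  have hodd : ¬ 2 ∣ L γ := by
    have h3 := hL 3 (by norm_num)
    have := hLγ 0
    simp only [pow_zero, mul_one, zero_add, hL1] at this
    omega
  rintro ⟨x, hx⟩
  have hsplit : L γ = L ((2 : ℤ) • x) - L (γ ^ (i + 1) * α ^ 1) - L (γ ^ (2 * i + 1) * α ^ 2) := by
    rw [← map_sub, ← map_sub]
    congr 1
    simp only [zsmul_eq_mul, Int.cast_ofNat]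
    linear_combination hx
  rw [hsplit, map_smul, smul_eq_mul] at hodd
  exact hodd (((dvd_mul_right 2 _).sub (heven 1 (by norm_num) _)).sub (heven 2 (by norm_num) _))

theorem exists_isMaximal_one_sub_pow_mul_mem {i : ℕ}
    (hodd : ¬ 2 ∣ γ * (1 + γ ^ i * α + (γ ^ i * α) ^ 2)) (hγ : 2 ∣ γ ^ 2 - γ + 1)
    (hα : 2 * γ = α ^ 3 + 1) :
    ∃ P : Ideal S, P.IsMaximal ∧ 2 ∈ P ∧ 1 - γ ^ i * α ∈ P := by
  have hmul : 2 ∣ (1 - γ ^ i * α) * (γ * (1 + γ ^ i * α + (γ ^ i * α) ^ 2)) := by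
    convert! (two_dvd_one_sub_pow_mul_pow_three hγ hα i).mul_left γ using 1
    ring
  obtain ⟨P, hP, h2, hroot⟩ := exists_isMaximal_of_mul_mem
    (mt Ideal.mem_span_singleton.mp hodd) (Ideal.mem_span_singleton.mpr hmul)
  exact ⟨P, hP, (Ideal.span_singleton_le_iff_mem _).mp h2, hroot⟩

theorem mk_pow_eq_of_one_sub_pow_mul_mem {P : Ideal S} {i j : ℕ} (hi : 1 - γ ^ i * α ∈ P)
    (hj : 1 - γ ^ j * α ∈ P) : Ideal.Quotient.mk P γ ^ i = Ideal.Quotient.mk P γ ^ j := by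
  have hinv {k : ℕ} (hk : 1 - γ ^ k * α ∈ P) :
      Ideal.Quotient.mk P γ ^ k * Ideal.Quotient.mk P α = 1 := by
    rw [← map_pow, ← map_mul, ← map_one (Ideal.Quotient.mk P), eq_comm]
    exact Ideal.Quotient.eq.mpr hk
  exact left_inv_eq_right_inv (hinv hi) ((mul_comm _ _).trans (hinv hj))

theorem three_le_ncard_primesOver_two [Module.Finite ℤ S] (L : S →ₗ[ℤ] ℤ) (hL1 : L 1 = 6)
    (hL : ∀ k, ¬ 6 ∣ k → 4 ∣ L (α ^ k)) (hγ : 2 ∣ γ ^ 2 - γ + 1) (hα : 2 * γ = α ^ 3 + 1) :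
    3 ≤ ((Ideal.span {((2 : ℕ) : ℤ)}).primesOver S).ncard := by
  choose P hmax h2 hroot using fun i ↦
    exists_isMaximal_one_sub_pow_mul_mem (not_two_dvd_of_apply_pow L hL1 hL hγ hα i) hγ hα
  have hinj : Function.Injective fun i : Fin 3 ↦ P i := by
    intro i j (hij : P i = P j)
    have := (hmax i).isPrime
    exact Fin.ext <| (isPrimitiveRoot_mk_three (h2 i) hγ).pow_inj i.isLt j.isLt <|
      mk_pow_eq_of_one_sub_pow_mul_mem (hroot i) (hij ▸ hroot j)
  calc 3 = (Set.range fun i : Fin 3 ↦ P i).ncard := by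
        rw [← Set.image_univ, Set.ncard_image_of_injective _ hinj, Set.ncard_univ, Nat.card_fin]
    _ ≤ _ := Set.ncard_le_ncard
        (Set.range_subset_iff.mpr fun i ↦
          (mem_primesOver_span_natCast_iff Nat.prime_two).mpr ⟨hmax i, h2 i⟩)
        (Algebra.QuasiFinite.finite_primesOver _)

theorem ncard_primesOver_two_eq_three_and_inertiaDeg_eq_two [IsDedekindDomain S] [Module.Free ℤ S]
    [Module.Finite ℤ S] (hrank : Module.finrank ℤ S = 6)
    (htrace : ∀ k, ¬ 6 ∣ k → 4 ∣ Algebra.trace ℤ S (α ^ k)) (hγ : 2 ∣ γ ^ 2 - γ + 1)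
    (hα : 2 * γ = α ^ 3 + 1) :
    ((Ideal.span {((2 : ℕ) : ℤ)}).primesOver S).ncard = 3 ∧
      ∀ P ∈ (Ideal.span {((2 : ℕ) : ℤ)}).primesOver S, P.inertiaDeg ℤ = 2 := by
  have htrace_one : Algebra.trace ℤ S 1 = 6 := by
    simpa [hrank] using Algebra.trace_algebraMap (S := S) (1 : ℤ)
  have hprime : (Ideal.span {((2 : ℕ) : ℤ)}).IsPrime :=
    (Ideal.span_singleton_prime two_ne_zero).mpr Int.prime_two
  refine ncard_primesOver_and_inertiaDeg_eq hrank two_ne_zero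
    (three_le_ncard_primesOver_two _ htrace_one htrace hγ hα) fun P hP ↦ ?_
  have := hP.2
  obtain ⟨_, h2⟩ := (mem_primesOver_span_natCast_iff Nat.prime_two).mp hP
  exact two_le_inertiaDeg_of_isPrimitiveRoot two_ne_zero three_ne_zero (by norm_num) P
    (isPrimitiveRoot_mk_three h2 hγ)

end CubeRoots

theorem exists_two_mul_eq_pow_three_add_one {S : Type*} [CommRing S] [IsDomain S]
    [IsIntegrallyClosed S] (h2 : (2 : S) ≠ 0) {α : S} {F : ℤ[X]} (hroot : aeval α F = 0)
    (hmod : F.map (Int.castRingHom (ZMod 8)) = X ^ 6 + C 3) :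
    ∃ γ : S, 2 * γ = α ^ 3 + 1 ∧ 2 ∣ γ ^ 2 - γ + 1 := by
  have hmod' :
      F.map (Int.castRingHom (ZMod 8)) = (X ^ 6 + C 3 : ℤ[X]).map (Int.castRingHom (ZMod 8)) := by
    simp only [hmod, Polynomial.map_add, Polynomial.map_pow, map_X, map_ofNat, Polynomial.map_ofNat]
  obtain ⟨h, hh⟩ := natCast_dvd_aeval_sub_aeval hmod' α
  simp only [hroot, map_add, map_pow, aeval_X, map_ofNat, Nat.cast_ofNat] at hh
  have hsq : (α ^ 3) ^ 2 = 1 + 4 * (-1 - 2 * h) := by linear_combination -hh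
  obtain ⟨γ, hγ, hγ_sq⟩ := exists_two_mul_eq_add_one_of_sq_eq h2 hsq
  exact ⟨γ, hγ, -h, by linear_combination hγ_sq⟩

theorem three_primes_above_two_general {K : Type*} [Field K] [NumberField K] (α : 𝓞 K) (F : ℤ[X])
    (hF : F.Monic) (hmod : F.map (Int.castRingHom (ZMod 8)) = X ^ 6 + C 3) (hirr : Irreducible F)
    (hroot : aeval (α : K) F = 0) (hgen : Algebra.adjoin ℚ {(α : K)} = ⊤) :
    Nat.card {P : Ideal (𝓞 K) // P.IsMaximal ∧ (2 : 𝓞 K) ∈ P} = 3 ∧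
      ∀ P : Ideal (𝓞 K), P.IsMaximal → (2 : 𝓞 K) ∈ P → Nat.card (𝓞 K ⧸ P) = 2 ^ 2 := by
  have hdeg : F.natDegree = 6 := by
    have : Fact (1 < 8) := ⟨by norm_num⟩
    rw [← hF.natDegree_map (Int.castRingHom (ZMod 8)), hmod, natDegree_X_pow_add_C]
  have hrank : Module.finrank ℤ (𝓞 K) = 6 :=
    (finrank_eq_natDegree_of_irreducible hF hirr hroot hgen).trans hdeg
  have hα : aeval α F = 0 := by
    rwa [← FaithfulSMul.algebraMap_eq_zero_iff (𝓞 K) K, ← aeval_algebraMap_apply]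
  obtain ⟨γ, hγα, hγ⟩ := exists_two_mul_eq_pow_three_add_one two_ne_zero hα hmod
  have htrace (k : ℕ) (hk : ¬ 6 ∣ k) : 4 ∣ Algebra.trace ℤ (𝓞 K) (α ^ k) :=
    (by norm_num : (4 : ℤ) ∣ (8 : ℕ)).trans <|
      natCast_dvd_trace_pow_of_not_natDegree_dvd hF hirr hroot hgen (hdeg ▸ hmod) (hdeg ▸ hk)
  obtain ⟨hcard, hinertia⟩ :=
    ncard_primesOver_two_eq_three_and_inertiaDeg_eq_two hrank htrace hγ hγα
  have hmem {P : Ideal (𝓞 K)} :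
      P ∈ (Ideal.span {((2 : ℕ) : ℤ)}).primesOver (𝓞 K) ↔ P.IsMaximal ∧ (2 : 𝓞 K) ∈ P :=
    mem_primesOver_span_natCast_iff Nat.prime_two
  refine ⟨?_, fun P hP h2 ↦ ?_⟩
  · rw [← hcard, ← Nat.card_coe_set_eq]
    exact Nat.card_congr (Equiv.subtypeEquivRight fun P ↦ hmem.symm)
  · have hPover := hmem.mpr ⟨hP, h2⟩
    have := hPover.2
    rw [natCard_quotient_eq_pow_inertiaDeg 2 P, hinertia P hPover]

theorem monic_X_pow_add_C_mul_X_pow_add_C {R : Type*} [CommRing R] {m n : ℕ} (hmn : m < n)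
    (a b : R) : (X ^ n + C a * X ^ m + C b).Monic := by
  rw [add_assoc]
  refine monic_X_pow_add ((degree_add_le _ _).trans_lt (max_lt ?_ ?_))
  · exact (degree_C_mul_X_pow_le m a).trans_lt (mod_cast hmn)
  · exact degree_C_le.trans_lt (mod_cast hmn.bot_lt)

theorem map_trinomial_zmod_eight (m : ℕ) :
    (X ^ 6 + C 72 * X ^ m + C 35 : ℤ[X]).map (Int.castRingHom (ZMod 8)) = X ^ 6 + C 3 := by
  have h72 : Int.castRingHom (ZMod 8) 72 = 0 := rfl
  have h35 : Int.castRingHom (ZMod 8) 35 = 3 := rfl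
  simp only [Polynomial.map_add, Polynomial.map_mul, Polynomial.map_pow, map_X, map_C, h72, h35,
    C_0, zero_mul, add_zero]

/-- For `K` defined by a root of `x^6 + 72 x^m + 35`, there are exactly three
distinct prime ideals of `ℤ_K` above `2`, each with residue degree `2`. -/
theorem three_primes_above_two
    {K : Type*} [Field K] [NumberField K] (α : 𝓞 K)
    (m : ℕ) (hm : 1 ≤ m) (hm5 : m ≤ 5)
    (F : ℤ[X]) (hF : F = X ^ 6 + C 72 * X ^ m + C 35)
    (hirr : Irreducible F)
    (hroot : Polynomial.aeval (α : K) F = 0)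
    (hgen : Algebra.adjoin ℚ {(α : K)} = ⊤) :
    Nat.card {P : Ideal (𝓞 K) // P.IsMaximal ∧ (2 : 𝓞 K) ∈ P} = 3 ∧
      ∀ P : Ideal (𝓞 K), P.IsMaximal → (2 : 𝓞 K) ∈ P → Nat.card (𝓞 K ⧸ P) = 2 ^ 2 := by
  subst hF
  exact three_primes_above_two_general α _
    (monic_X_pow_add_C_mul_X_pow_add_C (Nat.lt_succ_of_le hm5) 72 35) (map_trinomial_zmod_eight m)
    hirr hroot hgen
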